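/- arXiv:2512.05376 — 2 statements merged into one kernel-verified Lean document; each statement's English description precedes it below -/
import Mathlib

section
/- Fix an integer k ≥ 4, and let G be a connected finite simple graph such that every connected induced subgraph of G with exactly k vertices is a path or a cycle. Then G itself is a path or a cycle. -/
namespace PathOrCycle

/-- A set closed under adjacency in a connected graph is everything. -/
lemma exists_boundary {V : Type*} (G : SimpleGraph V) (hG : G.Connected) (S : Set V)
    (hS : S.Nonempty) (w : V) (hw : w ∉ S) : ∃ a ∈ S, ∃ b, b ∉ S ∧ G.Adj a b := by
  obtain ⟨v, hv⟩ := hS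
  obtain ⟨p⟩ := hG.preconnected v w
  obtain ⟨d, -, h1, h2⟩ := p.exists_boundary_dart S hv hw
  exact ⟨d.fst, h1, d.snd, h2, d.adj⟩

lemma extend_connected {V : Type*} [Fintype V] (G : SimpleGraph V) (hG : G.Connected)
    (s : Finset V) (hs : (G.induce (↑s : Set V)).Connected) (k : ℕ) (h1 : s.card ≤ k)
    (h2 : k ≤ Fintype.card V) :
    ∃ t : Finset V, s ⊆ t ∧ t.card = k ∧ (G.induce (↑t : Set V)).Connected := by
  classical
  induction k, h1 using Nat.le_induction with
  | base => exact ⟨s, subset_rfl, rfl, hs⟩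
  | succ k hk ih =>
    obtain ⟨t, hst, htc, ht⟩ := ih (by omega)
    obtain ⟨w, hw⟩ : ∃ w, w ∉ t := by
      by_contra! h
      have : t = Finset.univ := by ext; simp [h]
      rw [this, Finset.card_univ] at htc
      omega
    obtain ⟨⟨x, hx⟩⟩ := ht.nonempty
    obtain ⟨a, ha, b, hb, hab⟩ := exists_boundary G hG (↑t) ⟨x, hx⟩ w (by simpa using hw)
    refine ⟨insert b t, hst.trans (Finset.subset_insert _ _), ?_, ?_⟩
    · rw [Finset.card_insert_of_notMem (by simpa using hb), htc]
    · have h := SimpleGraph.induce_union_connected ht.preconnected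
        (SimpleGraph.induce_pair_connected_of_adj hab).preconnected ⟨a, ha, by simp⟩
      have e : (↑t ∪ {a, b} : Set V) = ↑(insert b t) := by
        ext y
        simp only [Set.mem_union, Finset.mem_coe, Set.mem_insert_iff, Set.mem_singleton_iff,
          Finset.coe_insert]
        constructor
        · rintro (h | rfl | h)
          exacts [Or.inr h, Or.inr ha, Or.inl h]
        · tauto
      rwa [e] at h

/-- No vertex has three distinct neighbours. -/
def NoClaw {V : Type*} (G : SimpleGraph V) : Prop :=
  ∀ v a b c : V, G.Adj v a → G.Adj v b → G.Adj v c → a = b ∨ a = c ∨ b = c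

lemma noClaw_path (n : ℕ) : NoClaw (SimpleGraph.pathGraph n) := by
  intro v a b c
  simp only [SimpleGraph.pathGraph_adj, Fin.ext_iff]
  omega

lemma noClaw_cycle (n : ℕ) (hn : 3 ≤ n) : NoClaw (SimpleGraph.cycleGraph n) := by
  obtain ⟨m, rfl⟩ : ∃ m, n = m + 2 := ⟨n - 2, by omega⟩
  intro v a b c
  have key : ∀ x, (SimpleGraph.cycleGraph (m + 2)).Adj v x → x = v - 1 ∨ x = v + 1 := by
    intro x hx
    rw [SimpleGraph.cycleGraph_adj] at hx
    rcases hx with h | h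
    · left; rw [← h]; abel
    · right; rw [← h]; abel
  intro h1 h2 h3
  rcases key _ h1 with rfl | rfl <;> rcases key _ h2 with rfl | rfl <;>
    rcases key _ h3 with rfl | rfl <;> simp

lemma NoClaw.of_iso {V W : Type*} {G : SimpleGraph V} {H : SimpleGraph W} (e : G ≃g H)
    (h : NoClaw H) : NoClaw G := by
  intro v a b c h1 h2 h3
  have := h (e v) (e a) (e b) (e c) (e.map_adj_iff.2 h1) (e.map_adj_iff.2 h2) (e.map_adj_iff.2 h3)
  simpa using this

/-- `f` restricted to `{0, ..., m-1}` is a path. -/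
def IsP {V : Type*} (G : SimpleGraph V) (m : ℕ) (f : ℕ → V) : Prop :=
  (∀ i j, i < m → j < m → f i = f j → i = j) ∧ ∀ i, i + 1 < m → G.Adj (f i) (f (i + 1))

lemma IsP.card_le {V : Type*} [Fintype V] {G : SimpleGraph V} {m : ℕ} {f : ℕ → V}
    (h : IsP G m f) : m ≤ Fintype.card V := by
  have := Fintype.card_le_of_injective (fun i : Fin m => f i)
    (fun i j hij => Fin.ext (h.1 i j i.2 j.2 hij))
  simpa using this

theorem main {V : Type*} [Fintype V] (G : SimpleGraph V)
    (hG : G.Connected) (hN : NoClaw G) :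
    (∃ n : ℕ, Nonempty (G ≃g SimpleGraph.pathGraph n)) ∨
      (∃ n : ℕ, 3 ≤ n ∧ Nonempty (G ≃g SimpleGraph.cycleGraph n)) := by
  classical
  obtain ⟨v⟩ := hG.nonempty
  have h1 : ∃ f, IsP G 1 f := ⟨fun _ => v, fun i j hi hj _ => by omega, fun i hi => by omega⟩
  have hV : 1 ≤ Fintype.card V := h1.choose_spec.card_le
  obtain ⟨m, hm1, ⟨f, hf⟩, hmax⟩ : ∃ m, 1 ≤ m ∧ (∃ f, IsP G m f) ∧ ¬ ∃ f, IsP G (m + 1) f := by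
    refine ⟨Nat.findGreatest (fun m => ∃ f, IsP G m f) (Fintype.card V),
      Nat.le_findGreatest hV h1, Nat.findGreatest_spec (P := fun m => ∃ f, IsP G m f) hV h1, ?_⟩
    rintro ⟨f, hf⟩
    have := Nat.le_findGreatest (P := fun m => ∃ f, IsP G m f) hf.card_le ⟨f, hf⟩
    omega
  obtain ⟨hinj, hadj⟩ := hf
  have hadj' : ∀ i, 0 < i → i < m → G.Adj (f i) (f (i - 1)) := by
    intro i h0 hi
    have := hadj (i - 1) (by omega)
    rw [Nat.sub_add_cancel h0] at this
    exact this.symm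
  have hsurj : ∀ w, ∃ i, i < m ∧ f i = w := by
    by_contra! hcon
    obtain ⟨w, hw⟩ := hcon
    obtain ⟨a, ⟨i, hi, rfl⟩, b, hb, hab⟩ := exists_boundary G hG {x | ∃ i, i < m ∧ f i = x}
      ⟨f 0, 0, by omega, rfl⟩ w (by rintro ⟨i, hi, h⟩; exact hw i hi h)
    have hb' : ∀ j, j < m → f j ≠ b := fun j hj h => hb ⟨j, hj, h⟩
    apply hmax
    by_cases hlast : i + 1 = m
    · refine ⟨fun j => if j < m then f j else b, ?_, ?_⟩
      · intro j l hj hl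
        dsimp only
        split_ifs with c1 c2 c2
        · exact hinj _ _ c1 c2
        · exact fun h => absurd h (hb' _ c1)
        · exact fun h => absurd h.symm (hb' _ c2)
        · intro; omega
      · intro j hj
        dsimp only
        rw [if_pos (by omega)]
        split_ifs with c
        · exact hadj j c
        · obtain rfl : j = i := by omega
          exact hab
    by_cases hfirst : i = 0
    · subst hfirst
      refine ⟨fun j => if j = 0 then b else f (j - 1), ?_, ?_⟩
      · intro j l hj hl
        dsimp only
        split_ifs with c1 c2 c2
        · intro; omega
        · exact fun h => absurd h.symm (hb' _ (by omega))
        · exact fun h => absurd h (hb' _ (by omega))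
        · intro h
          have := hinj _ _ (by omega) (by omega) h
          omega
      · intro j hj
        dsimp only
        rw [if_neg (by omega : ¬ j + 1 = 0)]
        split_ifs with c
        · subst c; exact hab.symm
        · have := hadj' j (by omega) (by omega)
          simpa using this.symm
    · exfalso
      rcases hN _ _ _ _ hab (hadj i (by omega)) (hadj' i (by omega) hi) with h | h | h
      · exact hb' _ (by omega) h.symm
      · exact hb' _ (by omega) h.symm
      · have := hinj _ _ (by omega) (by omega) h
        omega
  have hlt : ∀ i j, i < j → j < m → G.Adj (f i) (f j) → j = i + 1 ∨ (i = 0 ∧ j + 1 = m ∧ 3 ≤ m) := by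
    intro i j hij hj hA
    by_contra! hc
    obtain ⟨hc1, hc2⟩ := hc
    by_cases hi : i = 0
    · have hjm : j + 1 < m := by
        by_contra hh
        have := hc2 hi (by omega)
        omega
      rcases hN _ _ _ _ hA.symm (hadj j hjm) (hadj' j (by omega) hj) with h | h | h <;>
        have := hinj _ _ (by omega) (by omega) h <;> omega
    · rcases hN _ _ _ _ hA (hadj i (by omega)) (hadj' i (by omega) (by omega)) with h | h | h <;>
        have := hinj _ _ (by omega) (by omega) h <;> omega
  have hbij : Function.Bijective (fun i : Fin m => f i) :=
    ⟨fun i j hij => Fin.ext (hinj i j i.2 j.2 hij), fun w => by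
      obtain ⟨i, hi, h⟩ := hsurj w
      exact ⟨⟨i, hi⟩, h⟩⟩
  let e : Fin m ≃ V := Equiv.ofBijective _ hbij
  have he : ∀ i, e i = f i := fun _ => rfl
  by_cases hcyc : 3 ≤ m ∧ G.Adj (f 0) (f (m - 1))
  · obtain ⟨hm3, hc⟩ := hcyc
    refine Or.inr ⟨m, hm3, ⟨SimpleGraph.Iso.symm ⟨e, ?_⟩⟩⟩
    intro a b
    rw [he, he, SimpleGraph.cycleGraph_adj']
    have hsub : ∀ x y : Fin m, (x - y).val = 1 ↔
        (x.val = y.val + 1 ∨ (x.val = 0 ∧ y.val + 1 = m)) := by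
      intro x y
      have hx := x.2
      have hy := y.2
      rw [Fin.sub_def]
      dsimp only
      rcases le_or_gt y.val x.val with h | h
      · rw [show m - y.val + x.val = (x.val - y.val) + m by omega, Nat.add_mod_right,
          Nat.mod_eq_of_lt (by omega)]
        omega
      · rw [Nat.mod_eq_of_lt (by omega)]
        omega
    rw [hsub, hsub]
    constructor
    · intro h
      rcases lt_trichotomy a.val b.val with hl | hl | hl
      · have := hlt _ _ hl b.2 h
        omega
      · rw [hl] at h; exact absurd h (G.irrefl)
      · have := hlt _ _ hl a.2 h.symm
        omega
    · rintro ((h | ⟨h, h'⟩) | (h | ⟨h, h'⟩))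
      · rw [h]; exact (hadj _ (by omega)).symm
      · rw [h, show b.val = m - 1 by omega]; exact hc
      · rw [h]; exact (hadj _ (by omega))
      · rw [h, show a.val = m - 1 by omega]; exact hc.symm
  · refine Or.inl ⟨m, ⟨SimpleGraph.Iso.symm ⟨e, ?_⟩⟩⟩
    intro a b
    rw [he, he, SimpleGraph.pathGraph_adj]
    have hlt' : ∀ i j, i < j → j < m → G.Adj (f i) (f j) → j = i + 1 := by
      intro i j hij hj hA
      rcases hlt i j hij hj hA with h | ⟨rfl, h2, h3⟩
      · exact h
      · exfalso
        apply hcyc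
        rw [show m - 1 = j by omega]
        exact ⟨h3, hA⟩
    constructor
    · intro h
      rcases lt_trichotomy a.val b.val with hl | hl | hl
      · have := hlt' _ _ hl b.2 h
        omega
      · rw [hl] at h; exact absurd h (G.irrefl)
      · have := hlt' _ _ hl a.2 h.symm
        omega
    · rintro (h | h)
      · rw [← h]; exact (hadj _ (by omega))
      · rw [← h]; exact (hadj _ (by omega)).symm

end PathOrCycle

/-- Fix `k ≥ 4`. If every connected induced subgraph with exactly `k` vertices
of a connected graph `G` (with at least `k` vertices) is a path or a cycle, then `G` itself is a
path or a cycle. -/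
theorem path_or_cycle_of_k_vertex_induced {V : Type*} [Fintype V] (G : SimpleGraph V)
    (hG : G.Connected) (k : ℕ) (hk : 4 ≤ k) (hkcard : k ≤ Fintype.card V)
    (hyp : ∀ s : Finset V, s.card = k → (G.induce (↑s : Set V)).Connected →
      (∃ n : ℕ, Nonempty ((G.induce (↑s : Set V)) ≃g SimpleGraph.pathGraph n)) ∨
        (∃ n : ℕ, 3 ≤ n ∧ Nonempty ((G.induce (↑s : Set V)) ≃g SimpleGraph.cycleGraph n))) :
    (∃ n : ℕ, Nonempty (G ≃g SimpleGraph.pathGraph n)) ∨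
      (∃ n : ℕ, 3 ≤ n ∧ Nonempty (G ≃g SimpleGraph.cycleGraph n)) := by
  classical
  apply PathOrCycle.main G hG
  intro v a b c ha hb hc
  have hconn : (G.induce (↑({v, a, b, c} : Finset V) : Set V)).Connected := by
    have h := SimpleGraph.induce_union_connected
      (SimpleGraph.induce_union_connected
        (SimpleGraph.induce_pair_connected_of_adj ha).preconnected
        (SimpleGraph.induce_pair_connected_of_adj hb).preconnected ⟨v, by simp⟩).preconnected
      (SimpleGraph.induce_pair_connected_of_adj hc).preconnected ⟨v, by simp⟩
    have e : (({v, a} ∪ {v, b}) ∪ {v, c} : Set V) = ↑({v, a, b, c} : Finset V) := by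
      ext y
      simp
      tauto
    rwa [e] at h
  obtain ⟨t, hst, htc, ht⟩ := PathOrCycle.extend_connected G hG _ hconn k
    (Finset.card_le_four.trans hk) hkcard
  have hN : PathOrCycle.NoClaw (G.induce (↑t : Set V)) := by
    rcases hyp t htc ht with ⟨n, ⟨e⟩⟩ | ⟨n, hn, ⟨e⟩⟩
    · exact (PathOrCycle.noClaw_path n).of_iso e
    · exact (PathOrCycle.noClaw_cycle n hn).of_iso e
  have := hN ⟨v, hst (by simp)⟩ ⟨a, hst (by simp)⟩ ⟨b, hst (by simp)⟩ ⟨c, hst (by simp)⟩ ha hb hc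
  simpa using this
end

section
/- Let G be a connected finite simple graph that is not a path graph. Then there exist at least three distinct vertices v of G such that G − v is connected. -/
lemma exists_noncut_outside {V : Type*} [Fintype V] (G : SimpleGraph V)
    (hG : G.Connected) (S : Set V) (hS : (G.induce S).Connected) (hne : S ≠ Set.univ) :
    ∃ v, v ∉ S ∧ (G.induce ({v}ᶜ : Set V)).Connected := by
  obtain ⟨T, hST, hT⟩ := Finite.exists_le_maximal
    (p := fun T : Set V => (G.induce T).Connected ∧ T ≠ Set.univ) (a := S) ⟨hS, hne⟩
  obtain ⟨⟨hTc, hTne⟩, hmax⟩ := hT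
  obtain ⟨y, hy⟩ := (Set.ne_univ_iff_exists_notMem T).1 hTne
  obtain ⟨⟨x, hx⟩⟩ := hTc.nonempty
  obtain ⟨p⟩ := hG.preconnected x y
  obtain ⟨d, hd, h1, h2⟩ := p.exists_boundary_dart T hx hy
  have hc : (G.induce (T ∪ {d.snd})).Connected := by
    refine SimpleGraph.connected_induce_union hTc.preconnected ?_ h1 (Set.mem_singleton _) d.adj
    exact SimpleGraph.Preconnected.of_subsingleton
  have hu : T ∪ {d.snd} = Set.univ := by
    by_contra hne'
    exact h2 (hmax ⟨hc, hne'⟩ Set.subset_union_left (Or.inr rfl))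
  refine ⟨d.snd, fun h => h2 (hST h), ?_⟩
  have : ({d.snd}ᶜ : Set V) = T := by
    ext z
    have hz : z ∈ T ∪ {d.snd} := hu ▸ Set.mem_univ z
    constructor
    · intro h
      exact hz.resolve_right h
    · rintro h rfl
      exact h2 h
  rwa [this]

lemma iso_path_of_geodesic {V : Type*} (G : SimpleGraph V)
    (hG : G.Connected) {u v : V} (p : G.Walk u v) (hp : p.length = G.dist u v)
    (hs : ∀ x, x ∈ p.support) : ∃ n : ℕ, Nonempty (G ≃g SimpleGraph.pathGraph n) := by
  have hd : ∀ i, i ≤ p.length → G.dist u (p.getVert i) = i := by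
    intro i hi
    have h1 := SimpleGraph.dist_le (p.take i)
    have h2 := SimpleGraph.dist_le (p.drop i)
    have h3 := hG.dist_triangle (u := u) (v := p.getVert i) (w := v)
    rw [SimpleGraph.Walk.take_length] at h1
    rw [SimpleGraph.Walk.drop_length] at h2
    omega
  refine ⟨p.length + 1, ⟨SimpleGraph.Iso.symm ⟨Equiv.ofBijective
    (fun i : Fin (p.length + 1) => p.getVert i) ⟨?_, ?_⟩, ?_⟩⟩⟩
  · intro i j hij
    have h1 := hd i (by omega)
    have h2 := hd j (by omega)
    simp only at hij
    rw [hij] at h1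
    exact Fin.ext (by omega)
  · intro x
    obtain ⟨i, hi, hle⟩ := SimpleGraph.Walk.mem_support_iff_exists_getVert.1 (hs x)
    exact ⟨⟨i, by omega⟩, hi⟩
  · intro i j
    rw [SimpleGraph.pathGraph_adj]
    change G.Adj (p.getVert i) (p.getVert j) ↔ _
    have h1 := hd i (by omega)
    have h2 := hd j (by omega)
    constructor
    · intro h
      have h3 := hG.dist_triangle (u := u) (v := p.getVert i) (w := p.getVert j)
      have h4 := hG.dist_triangle (u := u) (v := p.getVert j) (w := p.getVert i)
      rw [SimpleGraph.dist_eq_one_iff_adj.2 h] at h3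
      rw [SimpleGraph.dist_eq_one_iff_adj.2 h.symm] at h4
      have : (i : ℕ) ≠ j := by
        intro e
        rw [e] at h
        exact h.ne rfl
      omega
    · rintro (h | h)
      · rw [← h]
        exact p.adj_getVert_succ (by omega)
      · rw [← h]
        exact (p.adj_getVert_succ (by omega)).symm

/-- A connected finite simple graph which is not a path has at least three
distinct vertices whose removal leaves a connected graph. -/
theorem three_noncut_vertices {V : Type*} [Fintype V] (G : SimpleGraph V)
    (hG : G.Connected) (hnp : ¬ ∃ n : ℕ, Nonempty (G ≃g SimpleGraph.pathGraph n)) :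
    ∃ u v w : V, u ≠ v ∧ u ≠ w ∧ v ≠ w ∧
      (G.induce ({u}ᶜ : Set V)).Connected ∧
      (G.induce ({v}ᶜ : Set V)).Connected ∧
      (G.induce ({w}ᶜ : Set V)).Connected := by
  have key : ∀ a b : V, ∃ w, w ≠ a ∧ w ≠ b ∧ (G.induce ({w}ᶜ : Set V)).Connected := by
    intro a b
    obtain ⟨p, hp⟩ := hG.exists_walk_length_eq_dist a b
    obtain ⟨w, hw, hc⟩ := exists_noncut_outside G hG {x | x ∈ p.support}
      p.connected_induce_support (fun h => hnp (iso_path_of_geodesic G hG p hp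
        (fun x => by
          have : x ∈ {x | x ∈ p.support} := h ▸ Set.mem_univ x
          exact this)))
    refine ⟨w, ?_, ?_, hc⟩
    · rintro rfl
      exact hw p.start_mem_support
    · rintro rfl
      exact hw p.end_mem_support
  obtain ⟨x⟩ := hG.nonempty
  obtain ⟨u, -, -, hu⟩ := key x x
  obtain ⟨v, hv1, -, hv⟩ := key u u
  obtain ⟨w, hw1, hw2, hw⟩ := key u v
  exact ⟨u, v, w, hv1.symm, hw1.symm, hw2.symm, hu, hv, hw⟩
end
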